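/- The Riemann Hypothesis holds if and only if for every ε > 0 one has det(C_n) = O(n^{1/2+ε}) as n → ∞. -/

import Mathlib

/-- The `n × n` Redheffer matrix: its `(i,j)` entry (with `1 ≤ i, j ≤ n`, realized via
`Fin n` shifted by one) is `1` if `j = 1` or `i ∣ j`, and `0` otherwise. -/
def Cmat (n : ℕ) : Matrix (Fin n) (Fin n) ℤ :=
  fun i j => if j.val = 0 ∨ (i.val + 1) ∣ (j.val + 1) then 1 else 0

section P1
open ArithmeticFunction in
lemma sum_moebius_dvd (m j : ℕ) (hj : j ≤ m) :
    ∑ i : Fin (m+1), (if (i.val+1) ∣ (j+1) then moebius (i.val+1) else 0) = if j = 0 then 1 else 0 := by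
  have h := Fin.sum_univ_eq_sum_range (fun i => if (i+1) ∣ (j+1) then moebius (i+1) else 0) (m+1)
  rw [h]
  have h2 : ∑ d ∈ (j+1).divisors, moebius d = if j = 0 then 1 else 0 := by
    rw [← ArithmeticFunction.coe_mul_zeta_apply, moebius_mul_coe_zeta, ArithmeticFunction.one_apply]
    simp
  rw [← h2, ← Finset.sum_filter]
  refine Finset.sum_bij' (fun i _ => i+1) (fun d _ => d-1) ?_ ?_ ?_ ?_ ?_
  · intro i hi
    simp only [Finset.mem_filter] at hi
    simpa using hi.2
  · intro d hd
    have hd' := (Nat.mem_divisors.1 hd).1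
    have h1 := Nat.pos_of_mem_divisors hd
    have h2 := Nat.le_of_dvd (by omega) hd'
    simp only [Finset.mem_filter, Finset.mem_range]
    rw [Nat.sub_add_cancel h1]
    exact ⟨by omega, hd'⟩
  · intro i hi; simp
  · intro d hd
    have h1 := Nat.pos_of_mem_divisors hd
    exact Nat.sub_add_cancel h1
  · intro i hi; rfl

lemma det_Cmat_succ (m : ℕ) : (Cmat (m+1)).det = ∑ k ∈ Finset.Icc 1 (m+1), ArithmeticFunction.moebius k := by
  have h := Matrix.det_updateRow_sum (Cmat (m+1)) 0 (fun k => ArithmeticFunction.moebius (k.val+1))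
  simp only [Fin.val_zero, zero_add, ArithmeticFunction.moebius_apply_one, one_smul] at h
  rw [← h, Matrix.det_succ_row_zero]
  have hrow : ∀ j : Fin (m+1), (∑ k : Fin (m+1), ArithmeticFunction.moebius (k.val+1) • (Cmat (m+1)) k) j
      = if j = 0 then ∑ k ∈ Finset.Icc 1 (m+1), ArithmeticFunction.moebius k else 0 := by
    intro j
    rw [Finset.sum_apply]
    simp only [Pi.smul_apply, smul_eq_mul, Cmat, mul_ite, mul_one, mul_zero]
    split_ifs with hj
    · subst hj
      simp only [Fin.val_zero, true_or, if_true]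
      rw [Fin.sum_univ_eq_sum_range (fun i => ArithmeticFunction.moebius (i+1)) (m+1)]
      rw [Finset.range_eq_Ico, Finset.sum_Ico_add' (fun i => ArithmeticFunction.moebius i) 0 (m+1) 1]
      rfl
    · have hj' : j.val ≠ 0 := fun h => hj (Fin.ext h)
      have := sum_moebius_dvd m j.val (by omega)
      simpa [hj'] using this
  rw [Finset.sum_eq_single 0]
  · simp only [Matrix.updateRow_self, hrow, if_true, Fin.val_zero, pow_zero, one_mul]
    rw [Matrix.det_of_isUpperTriangular, Finset.prod_eq_one, mul_one]
    · intro i _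
      simp [Matrix.submatrix, Matrix.updateRow_apply, Cmat, Fin.succ_ne_zero]
    · intro i j hij
      simp only [id] at hij
      have : ¬ (i.val + 1 + 1 ∣ j.val + 1 + 1) := fun hd => by
        have := Nat.le_of_dvd (by omega) hd
        have : j.val < i.val := hij
        omega
      simp [Matrix.submatrix, Matrix.updateRow_apply, Cmat, Fin.succ_ne_zero, this]
  · intro j _ hj
    rw [Matrix.updateRow_self, hrow, if_neg hj]; simp
  · simp

lemma det_Cmat (n : ℕ) (hn : 1 ≤ n) : (Cmat n).det = ∑ k ∈ Finset.Icc 1 n, ArithmeticFunction.moebius k := by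
  obtain ⟨m, rfl⟩ := Nat.exists_eq_add_of_le' hn
  exact det_Cmat_succ m
end P1

section P2
open MeasureTheory Set Filter Topology Asymptotics

lemma tail_differentiableAt (g : ℝ → ℂ) (hg : Measurable g) (C r : ℝ)
    (hb : ∀ t : ℝ, 1 < t → ‖g t‖ ≤ C * t ^ r) (s : ℂ) (hs : r < s.re) :
    DifferentiableAt ℂ (fun s : ℂ => ∫ t in Ioi (1:ℝ), g t * (t:ℂ) ^ (-(s + 1))) s := by
  have key : (fun s : ℂ => ∫ t in Ioi (1:ℝ), g t * (t:ℂ) ^ (-(s + 1)))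
      = fun s => mellin ((Ioi (1:ℝ)).indicator g) (-s) := by
    funext s
    rw [mellin]
    have : ∀ t : ℝ, (t:ℂ) ^ (-s - 1) • (Ioi (1:ℝ)).indicator g t
        = (Ioi (1:ℝ)).indicator (fun t : ℝ => g t * (t:ℂ) ^ (-(s + 1))) t := by
      intro t
      by_cases h : t ∈ Ioi (1:ℝ)
      · simp only [indicator_of_mem h, smul_eq_mul]
        rw [mul_comm, neg_add']
      · simp [indicator_of_notMem h]
    simp_rw [this]
    rw [setIntegral_indicator measurableSet_Ioi]
    congr 2
    ext t
    simp only [mem_Ioi, mem_inter_iff]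
    constructor
    · intro h; exact ⟨by linarith, h⟩
    · exact fun h => h.2
  rw [key]
  have hm : Measurable ((Ioi (1:ℝ)).indicator g) := hg.indicator measurableSet_Ioi
  have hd : DifferentiableAt ℂ (mellin ((Ioi (1:ℝ)).indicator g)) (-s) := by
    refine mellin_differentiableAt_of_isBigO_rpow (a := -r) (b := -s.re - 1) ?_ ?_ (by simpa using hs) ?_ (by simp)
    · have : LocallyIntegrableOn (fun t : ℝ => C * |t| ^ r) (Ioi 0) := by
        apply ContinuousOn.locallyIntegrableOn _ measurableSet_Ioi
        intro t ht
        apply ContinuousAt.continuousWithinAt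
        apply ContinuousAt.mul continuousAt_const
        apply ContinuousAt.rpow_const continuous_abs.continuousAt
        left; simpa using ne_of_gt ht
      refine this.mono hm.aestronglyMeasurable (Eventually.of_forall fun t => ?_)
      by_cases h : t ∈ Ioi (1:ℝ)
      · rw [indicator_of_mem h, abs_of_pos (zero_lt_one.trans h)]
        exact (hb t h).trans (le_abs_self _)
      · rw [indicator_of_notMem h, norm_zero]; exact norm_nonneg _
    · refine IsBigO.of_bound C ?_
      filter_upwards [eventually_gt_atTop (1:ℝ)] with t ht
      rw [indicator_of_mem (show t ∈ Ioi (1:ℝ) from ht), neg_neg, Real.norm_of_nonneg (by positivity)]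
      exact hb t ht
    · refine (EventuallyEq.trans_isBigO (f₂ := fun _ => (0:ℂ)) ?_ (isBigO_zero _ _))
      have : Iio (1:ℝ) ∈ 𝓝[>] (0:ℝ) := mem_nhdsWithin_of_mem_nhds (Iio_mem_nhds zero_lt_one)
      filter_upwards [this] with t ht
      rw [indicator_of_notMem]
      exact not_lt.2 (le_of_lt (show t < 1 from ht))
  exact hd.comp s differentiableAt_id.neg

noncomputable def Zf : ℂ → ℂ := Function.update (fun s => (s - 1) * riemannZeta s) 1 1

lemma Zf_of_ne {s : ℂ} (hs : s ≠ 1) : Zf s = (s - 1) * riemannZeta s := by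
  simp [Zf, Function.update_of_ne hs]

lemma Zf_differentiable : Differentiable ℂ Zf := by
  intro s
  by_cases hs : s = 1
  · subst hs
    apply AnalyticAt.differentiableAt
    apply Complex.analyticAt_of_differentiable_on_punctured_nhds_of_continuousAt
    · filter_upwards [self_mem_nhdsWithin] with z hz
      have : Zf =ᶠ[𝓝 z] fun s => (s - 1) * riemannZeta s := by
        filter_upwards [isOpen_ne.mem_nhds hz] with w hw using Zf_of_ne hw
      exact ((differentiableAt_id.sub_const 1).mul (differentiableAt_riemannZeta hz)).congr_of_eventuallyEq this
    · unfold Zf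
      rw [continuousAt_update_same]
      exact riemannZeta_residue_one
  · have : Zf =ᶠ[𝓝 s] fun s => (s - 1) * riemannZeta s := by
      filter_upwards [isOpen_ne.mem_nhds hs] with w hw using Zf_of_ne hw
    exact ((differentiableAt_id.sub_const 1).mul (differentiableAt_riemannZeta hs)).congr_of_eventuallyEq this

lemma eqOn_halfplane {f g : ℂ → ℂ} (a : ℝ) (ha : a < 2)
    (hf : ∀ s : ℂ, a < s.re → DifferentiableAt ℂ f s)
    (hg : ∀ s : ℂ, a < s.re → DifferentiableAt ℂ g s)
    (h : ∀ s : ℂ, 1 < s.re → f s = g s) : ∀ s : ℂ, a < s.re → f s = g s := by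
  have ho : IsOpen {s : ℂ | a < s.re} := isOpen_lt continuous_const Complex.continuous_re
  have hA : ∀ {f : ℂ → ℂ}, (∀ s : ℂ, a < s.re → DifferentiableAt ℂ f s) → AnalyticOnNhd ℂ f {s : ℂ | a < s.re} :=
    fun hf => DifferentiableOn.analyticOnNhd (fun s hs => (hf s hs).differentiableWithinAt) ho
  have := AnalyticOnNhd.eqOn_of_preconnected_of_eventuallyEq (hA hf) (hA hg)
    (convex_halfSpace_re_gt a).isPreconnected (z₀ := 2) (by simpa using ha) (by
      have : {s : ℂ | 1 < s.re} ∈ 𝓝 (2:ℂ) :=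
        (isOpen_lt continuous_const Complex.continuous_re).mem_nhds (by simp)
      filter_upwards [this] with s hs using h s hs)
  exact fun s hs => this hs

noncomputable def Kf (s : ℂ) : ℂ := ∫ t in Ioi (1:ℝ), ((Int.fract t : ℝ) : ℂ) * (t:ℂ) ^ (-(s + 1))

lemma fract_meas : Measurable (fun t : ℝ => ((Int.fract t : ℝ) : ℂ)) :=
  Complex.measurable_ofReal.comp measurable_fract

lemma Kf_differentiableAt (s : ℂ) (hs : 0 < s.re) : DifferentiableAt ℂ Kf s := by
  apply tail_differentiableAt _ fract_meas 1 0 _ s hs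
  intro t ht
  simp [abs_of_nonneg (Int.fract_nonneg t), (Int.fract_lt_one t).le]

lemma Kf_norm_le (s : ℂ) (hs : 0 < s.re) : ‖Kf s‖ ≤ 1 / s.re := by
  have hi : IntegrableOn (fun t : ℝ => t ^ (-(s.re + 1))) (Ioi 1) :=
    integrableOn_Ioi_rpow_of_lt (by linarith) zero_lt_one
  have h := integral_Ioi_rpow_of_lt (a := -(s.re+1)) (by linarith) zero_lt_one
  calc ‖Kf s‖ ≤ ∫ t in Ioi (1:ℝ), t ^ (-(s.re + 1)) := by
        apply norm_integral_le_of_norm_le hi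
        filter_upwards [ae_restrict_mem measurableSet_Ioi] with t ht
        have ht0 : (0:ℝ) < t := zero_lt_one.trans ht
        rw [norm_mul, Complex.norm_cpow_eq_rpow_re_of_pos ht0, Complex.norm_real,
          Real.norm_of_nonneg (Int.fract_nonneg t)]
        simp only [Complex.neg_re, Complex.add_re, Complex.one_re]
        exact mul_le_of_le_one_left (by positivity) (Int.fract_lt_one t).le
    _ = 1 / s.re := by
        rw [h]; simp only [Real.one_rpow]
        rw [show -(s.re+1)+1 = -s.re by ring, neg_div_neg_eq]

lemma zeta_eq_Kf {s : ℂ} (hs : 1 < s.re) : riemannZeta s = s / (s - 1) - s * Kf s := by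
  have h1 : riemannZeta s = s * ∫ t in Ioi (1:ℝ), (∑ k ∈ Finset.Icc 1 ⌊t⌋₊, (1:ℂ)) * (t:ℂ) ^ (-(s + 1)) := by
    have := LSeries_eq_mul_integral (fun _ => (1:ℂ)) zero_le_one hs ?_ ?_
    · rw [← this]
      exact (LSeries_one_eq_riemannZeta hs).symm
    · exact LSeriesSummable_one_iff.2 hs
    · simp only [Finset.sum_const, Nat.card_Icc, add_tsub_cancel_right, nsmul_eq_mul, mul_one, Real.rpow_one]
      exact IsBigO.of_bound 1 (Eventually.of_forall fun n => by simp)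
  have hi1 : IntegrableOn (fun t : ℝ => (t:ℂ) ^ (-s)) (Ioi 1) :=
    integrableOn_Ioi_cpow_of_lt (by simpa using hs) zero_lt_one
  have hi2 : IntegrableOn (fun t : ℝ => ((Int.fract t : ℝ) : ℂ) * (t:ℂ) ^ (-(s+1))) (Ioi 1) := by
    have h3 : IntegrableOn (fun t : ℝ => (t:ℂ) ^ (-(s+1))) (Ioi 1) :=
      integrableOn_Ioi_cpow_of_lt (by simp; linarith) zero_lt_one
    refine Integrable.mono h3 (fract_meas.aestronglyMeasurable.mul h3.aestronglyMeasurable) (Eventually.of_forall fun t => ?_)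
    rw [norm_mul, Complex.norm_real, Real.norm_of_nonneg (Int.fract_nonneg t)]
    exact mul_le_of_le_one_left (norm_nonneg _) (Int.fract_lt_one t).le
  have h2 : ∫ t in Ioi (1:ℝ), (∑ k ∈ Finset.Icc 1 ⌊t⌋₊, (1:ℂ)) * (t:ℂ) ^ (-(s + 1))
      = (∫ t in Ioi (1:ℝ), (t:ℂ) ^ (-s)) - Kf s := by
    rw [Kf, ← integral_sub hi1 hi2]
    refine setIntegral_congr_fun measurableSet_Ioi fun t ht => ?_
    have ht0 : (0:ℝ) < t := zero_lt_one.trans ht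
    have ht1 : (t:ℂ) ≠ 0 := by exact_mod_cast ht0.ne'
    have hfl : ((⌊t⌋₊ : ℕ) : ℂ) = (t:ℂ) - ((Int.fract t : ℝ) : ℂ) := by
      have : ((⌊t⌋₊ : ℕ) : ℝ) = t - Int.fract t := by
        rw [natCast_floor_eq_intCast_floor ht0.le]
        rw [← Int.self_sub_fract]
      rw [← Complex.ofReal_natCast, this]; push_cast; ring
    simp only [Finset.sum_const, Nat.card_Icc, add_tsub_cancel_right, nsmul_eq_mul, mul_one]
    rw [hfl, sub_mul]
    congr 1
    rw [neg_add, Complex.cpow_add _ _ ht1, Complex.cpow_neg_one]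
    field_simp
  rw [h1, h2, integral_Ioi_cpow_of_lt (by simpa using hs) zero_lt_one]
  have hs1 : s - 1 ≠ 0 := fun h => by
    have : s = 1 := sub_eq_zero.1 h
    rw [this] at hs; simp at hs
  have hs2 : -s + 1 ≠ 0 := fun h => hs1 (by linear_combination -h)
  simp only [Complex.ofReal_one, Complex.one_cpow]
  rw [show -s + 1 = -(s-1) by ring, neg_div_neg_eq]
  ring

lemma Zf_eq {s : ℂ} (hs : 0 < s.re) : Zf s = s - (s - 1) * s * Kf s := by
  refine eqOn_halfplane (f := Zf) (g := fun s => s - (s - 1) * s * Kf s) 0 (by norm_num) (fun s _ => Zf_differentiable s) ?_ ?_ s hs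
  · intro s hs
    have := Kf_differentiableAt s hs
    fun_prop
  · intro s hs
    have hs1 : s ≠ 1 := fun h => by rw [h] at hs; simp at hs
    have hs2 : s - 1 ≠ 0 := sub_ne_zero.2 hs1
    rw [Zf_of_ne hs1, zeta_eq_Kf hs]
    field_simp

/-- polynomial growth -/
lemma zeta_growth {s : ℂ} (hs : 1 / 2 ≤ s.re) (h1 : 1 ≤ ‖s - 1‖) : ‖riemannZeta s‖ ≤ 2 * ‖s‖ + 2 * ‖s‖ := by
  have hs0 : 0 < s.re := by linarith
  have hne : s ≠ 1 := fun h => by simp [h] at h1; linarith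
  have hne' : s - 1 ≠ 0 := sub_ne_zero.2 hne
  have : riemannZeta s = s / (s - 1) - s * Kf s := by
    have h2 := Zf_eq hs0
    rw [Zf_of_ne hne] at h2
    field_simp
    linear_combination h2
  rw [this]
  refine (norm_sub_le _ _).trans (add_le_add ?_ ?_)
  · rw [norm_div]
    have := div_le_self (norm_nonneg s) h1
    linarith [norm_nonneg s]
  · rw [norm_mul, mul_comm]
    apply mul_le_mul_of_nonneg_right _ (norm_nonneg _)
    refine (Kf_norm_le s hs0).trans ?_
    rw [div_le_iff₀ hs0]; linarith
end P2

section P3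
open MeasureTheory Set Filter Topology Asymptotics

noncomputable def Mer (n : ℕ) : ℂ := ∑ k ∈ Finset.Icc 1 n, ((ArithmeticFunction.moebius k : ℤ) : ℂ)

lemma mer_zero_free (r : ℝ) (hr : 0 ≤ r) (hr1 : r < 1)
    (hO : Mer =O[atTop] (fun n : ℕ => (n : ℝ) ^ r)) (s : ℂ) (hs : r < s.re) : Zf s ≠ 0 := by
  obtain ⟨C, hC0, hC⟩ : ∃ C : ℝ, 0 ≤ C ∧ ∀ n : ℕ, 1 ≤ n → ‖Mer n‖ ≤ C * (n:ℝ) ^ r := by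
    obtain ⟨C, hCpos, hC⟩ := bound_of_isBigO_nat_atTop hO
    refine ⟨C, hCpos.le, fun n hn => ?_⟩
    have hn' : (0:ℝ) < n := by exact_mod_cast hn
    have := @hC n (Real.rpow_pos_of_pos hn' r).ne'
    rwa [Real.norm_of_nonneg (by positivity)] at this
  have hdiff : ∀ s : ℂ, r < s.re → DifferentiableAt ℂ
      (fun s : ℂ => ∫ t in Ioi (1:ℝ), Mer ⌊t⌋₊ * (t:ℂ) ^ (-(s + 1))) s := by
    intro s hs
    refine tail_differentiableAt (fun t => Mer ⌊t⌋₊) ?_ C r ?_ s hs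
    · exact (measurable_from_nat (f := Mer)).comp Nat.measurable_floor
    · intro t ht
      have h1 : 1 ≤ ⌊t⌋₊ := (Nat.one_le_floor_iff t).2 ht.le
      refine (hC _ h1).trans ?_
      gcongr
      exact Nat.floor_le (by linarith)
  have hid := eqOn_halfplane (f := fun s => Zf s * (s * ∫ t in Ioi (1:ℝ), Mer ⌊t⌋₊ * (t:ℂ) ^ (-(s + 1))))
    (g := fun s => s - 1) r (by linarith)
    (fun s hs => (Zf_differentiable s).mul (differentiableAt_id.mul (hdiff s hs)))
    (fun s hs => by fun_prop) ?_ s hs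
  · intro h0
    simp only [h0, zero_mul] at hid
    have : s = 1 := by linear_combination -hid
    rw [this] at h0
    simp [Zf] at h0
  · intro s hs1
    have hne : s ≠ 1 := fun h => by rw [h] at hs1; simp at hs1
    have := LSeries_eq_mul_integral (fun n => ((ArithmeticFunction.moebius n : ℤ) : ℂ)) hr (s := s) (by linarith)
      (ArithmeticFunction.LSeriesSummable_moebius_iff.2 hs1) hO
    simp only [Mer]
    rw [← this, Zf_of_ne hne, ← ArithmeticFunction.LSeries_zeta_eq_riemannZeta hs1, mul_assoc,
      ArithmeticFunction.LSeries_zeta_mul_Lseries_moebius hs1, mul_one]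

lemma RH_of_zero_free (h : ∀ s : ℂ, 1 / 2 < s.re → Zf s ≠ 0) : RiemannHypothesis := by
  intro s hz htriv hs1
  have hz' : ∀ s : ℂ, s ≠ 1 → 1 / 2 < s.re → riemannZeta s ≠ 0 := fun s hs hre h0 =>
    h s hre (by rw [Zf_of_ne hs, h0, mul_zero])
  rcases lt_trichotomy s.re (1/2) with hlt | heq | hgt
  · exfalso
    have hs0 : s ≠ 0 := fun h => by rw [h, riemannZeta_zero] at hz; norm_num at hz
    have hw1 : (1 - s) ≠ 1 := fun h => hs0 (by linear_combination -h)
    have hwre : 1 / 2 < (1 - s).re := by simp; linarith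
    have hwn : ∀ n : ℕ, (1 - s) ≠ -n := fun n h => by
      rw [h] at hwre
      simp at hwre
      have : (0:ℝ) ≤ n := Nat.cast_nonneg n
      norm_num at hwre
      linarith
    have hfe := riemannZeta_one_sub hwn hw1
    rw [sub_sub_cancel, hz] at hfe
    have hG := Complex.Gamma_ne_zero hwn
    have hζ := hz' _ hw1 hwre
    have hpi : (2 * (Real.pi : ℂ)) ≠ 0 := by simp [Real.pi_ne_zero]
    have hcp : (2 * (Real.pi : ℂ)) ^ (-(1 - s)) ≠ 0 := by
      rw [Ne, Complex.cpow_eq_zero_iff]; tauto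
    have hcos : Complex.cos (Real.pi * (1 - s) / 2) = 0 := by
      by_contra hc
      exact (mul_ne_zero (mul_ne_zero (mul_ne_zero (mul_ne_zero two_ne_zero hcp) hG) hc) hζ) hfe.symm
    obtain ⟨k, hk⟩ := Complex.cos_eq_zero_iff.1 hcos
    have hpi' : (Real.pi : ℂ) ≠ 0 := by simp [Real.pi_ne_zero]
    have hk2 : s = -2 * (k : ℂ) := by
      have : (Real.pi : ℂ) * (1 - s) = Real.pi * (2 * k + 1) := by linear_combination 2 * hk
      have := mul_left_cancel₀ hpi' this
      linear_combination -this
    have hkre : s.re = -2 * (k:ℝ) := by rw [hk2]; simp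
    have hkpos : 0 < k := by
      rcases lt_trichotomy k 0 with h1 | h1 | h1
      · have : (k:ℝ) ≤ -1 := by exact_mod_cast Int.le_sub_one_of_lt h1
        linarith
      · rw [h1] at hk2; simp at hk2; exact absurd hk2 hs0
      · exact h1
    apply htriv
    refine ⟨(k - 1).toNat, ?_⟩
    have h3 : (((k - 1).toNat : ℕ) : ℂ) = (k:ℂ) - 1 := by
      have : (((k - 1).toNat : ℕ) : ℤ) = k - 1 := Int.toNat_of_nonneg (by omega)
      rw [← Int.cast_natCast, this]; push_cast; ring
    rw [h3, hk2]; ring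
  · exact heq
  · exact absurd hz (hz' s hs1 hgt)

lemma zero_free_of_RH (h : RiemannHypothesis) (s : ℂ) (hs : 1 / 2 < s.re) : Zf s ≠ 0 := by
  by_cases h1 : s = 1
  · rw [h1]; simp [Zf]
  · rw [Zf_of_ne h1]
    refine mul_ne_zero (sub_ne_zero.2 h1) fun h0 => ?_
    have := h s h0 ?_ h1
    · linarith
    · rintro ⟨n, hn⟩
      rw [hn] at hs
      have : (0:ℝ) ≤ n := Nat.cast_nonneg n
      simp at hs
      norm_num at hs
      linarith
end P3

section P4
open MeasureTheory Set Filter Topology Asymptotics Metric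

lemma exists_log_ball {c : ℂ} {R : ℝ} (hR : 0 < R) {F : ℂ → ℂ} (hF : DifferentiableOn ℂ F (ball c R))
    (h0 : ∀ z ∈ ball c R, F z ≠ 0) :
    ∃ f : ℂ → ℂ, DifferentiableOn ℂ f (ball c R) ∧ f c = Complex.log (F c) ∧
      ∀ z ∈ ball c R, Complex.exp (f z) = F z := by
  have hd : DifferentiableOn ℂ (fun z => deriv F z / F z) (ball c R) :=
    (hF.deriv isOpen_ball).div hF h0
  obtain ⟨f, hfc, hf⟩ := (hd.isConservativeOn.isExactOn_ball hd.continuousOn).with_val_at c (Complex.log (F c))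
  have hfd : DifferentiableOn ℂ f (ball c R) := fun z hz => (hf z hz).differentiableAt.differentiableWithinAt
  refine ⟨f, hfd, hfc, fun z hz => ?_⟩
  have hc : c ∈ ball c R := mem_ball_self hR
  have hg : ∀ w ∈ ball c R, HasDerivAt (fun w => F w * Complex.exp (-f w)) 0 w := by
    intro w hw
    have h1 := (hF.differentiableAt (isOpen_ball.mem_nhds hw)).hasDerivAt
    have h2 := (hf w hw).neg.cexp
    have h3 : HasDerivAt (fun w => F w * Complex.exp (-f w)) _ w := h1.mul h2
    have hw0 := h0 w hw
    have e : deriv F w * Complex.exp (-f w) + F w * (Complex.exp (-f w) * -(deriv F w / F w)) = 0 := by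
      field_simp
      ring
    exact e ▸ h3
  have hconst := isOpen_ball.is_const_of_deriv_eq_zero (convex_ball c R).isPreconnected
    (fun w hw => (hg w hw).differentiableAt.differentiableWithinAt) (fun w hw => (hg w hw).deriv) hz hc
  simp only [hfc, Complex.exp_neg] at hconst
  rw [Complex.exp_log (h0 c hc), mul_inv_cancel₀ (h0 c hc)] at hconst
  have := Complex.exp_ne_zero (f z)
  field_simp at hconst
  exact hconst.symm

lemma young_aux (θ ε K : ℝ) (h0 : 0 ≤ θ) (h1 : θ < 1) (hε : 0 < ε) (hK : 0 ≤ K) :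
    ∃ C : ℝ, ∀ x : ℝ, 0 ≤ x → K * x ^ θ ≤ C + ε * x := by
  have h1' : (0:ℝ) < 1 - θ := by linarith
  refine ⟨(K * ε ^ (-θ)) ^ (1 / (1 - θ)), fun x hx => ?_⟩
  have hK' : 0 ≤ (K * ε ^ (-θ)) ^ (1 / (1 - θ)) := by positivity
  have h := Real.geom_mean_le_arith_mean2_weighted h0 h1'.le (mul_nonneg hε.le hx) hK' (by ring)
  rw [← Real.rpow_mul (by positivity), one_div, inv_mul_cancel₀ h1'.ne', Real.rpow_one,
    Real.mul_rpow hε.le hx, Real.rpow_neg hε.le] at h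
  have hεθ : ε ^ θ ≠ 0 := (Real.rpow_pos_of_pos hε θ).ne'
  calc K * x ^ θ = ε ^ θ * x ^ θ * (K * (ε ^ θ)⁻¹) := by field_simp
    _ ≤ _ := h
    _ ≤ _ := by
      rw [Real.rpow_neg hε.le] at hK' 
      have e1 : θ * (ε * x) ≤ ε * x := mul_le_of_le_one_left (by positivity) h1.le
      have e2 : (1 - θ) * (K * (ε ^ θ)⁻¹) ^ (1 / (1 - θ)) ≤ (K * (ε ^ θ)⁻¹) ^ (1 / (1 - θ)) :=
        mul_le_of_le_one_left hK' (by linarith)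
      rw [Real.rpow_neg hε.le]
      simp only [one_div] at *
      linarith

/-- three circles combined with Borel-Caratheodory -/
lemma three_circles_aux (δ A : ℝ) (hδ : 0 < δ) (hδ1 : δ < 1 / 4) (hA : 1 ≤ A) :
    ∃ θ : ℝ, 0 ≤ θ ∧ θ < 1 ∧ ∀ (f : ℂ → ℂ) (M : ℝ), DifferentiableOn ℂ f (ball 0 (3/2)) →
      0 < M → ‖f 0‖ ≤ A → (∀ z ∈ ball (0:ℂ) (3/4), (f z).re ≤ A) → (∀ z ∈ ball (0:ℂ) (3/2), (f z).re ≤ M) →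
      ∀ z : ℂ, ‖z‖ ≤ 3 / 2 - 2 * δ → ‖f z‖ ≤ (9 * A) * (3 / δ * (M + A)) ^ θ := by
  set l := Real.log (1/2) with hl
  set u := Real.log (3/2 - δ) with hu
  have hlu : l < u := Real.log_lt_log (by norm_num) (by linarith)
  have hlu2 : l < Real.log (3/2 - 2*δ) := Real.log_lt_log (by norm_num) (by linarith)
  have hlu3 : Real.log (3/2 - 2*δ) < u := Real.log_lt_log (by linarith) (by linarith)
  refine ⟨(Real.log (3/2 - 2*δ) - l) / (u - l), by apply div_nonneg <;> linarith, ?_, ?_⟩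
  · rw [div_lt_one (by linarith)]; linarith
  intro f M hf hM hf0 hfA hfM z hz
  set B := 3 / δ * (M + A) with hB
  have hB1 : 1 ≤ B := by
    have : 1 ≤ 3 / δ := by rw [le_div_iff₀ hδ]; linarith
    nlinarith
  have hsm : ∀ z : ℂ, ‖z‖ ≤ 1 / 2 → ‖f z‖ ≤ 9 * A := by
    intro z hz
    have hb := Complex.borelCaratheodory (f := f) (R := 3/4) (M := A) (z := z) (by linarith)
      (hf.mono (ball_subset_ball (by norm_num))) (fun w hw => hfA w hw) (by norm_num)
      (by rw [mem_ball_zero_iff]; linarith)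
    refine hb.trans ?_
    have hz0 := norm_nonneg z
    rw [← add_div, div_le_iff₀ (by linarith)]
    nlinarith [norm_nonneg (f 0)]
  have hbg : ∀ z : ℂ, ‖z‖ ≤ 3 / 2 - δ → ‖f z‖ ≤ B := by
    intro z hz
    have hb := Complex.borelCaratheodory (f := f) (R := 3/2) (M := M) (z := z) hM hf
      (fun w hw => hfM w hw) (by norm_num) (by rw [mem_ball_zero_iff]; linarith)
    refine hb.trans ?_
    have hz0 := norm_nonneg z
    rw [← add_div, hB, div_mul_eq_mul_div]
    apply div_le_div₀ (by positivity) _ hδ (by linarith)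
    nlinarith [norm_nonneg (f 0)]
  have hBθ : ∀ θ : ℝ, 0 ≤ θ → 1 ≤ B ^ θ := fun θ h => Real.one_le_rpow hB1 h
  by_cases hz2 : ‖z‖ ≤ 1 / 2
  · refine (hsm z hz2).trans ?_
    exact le_mul_of_one_le_right (by linarith) (hBθ _ (by apply div_nonneg <;> linarith))
  push Not at hz2
  have hzpos : 0 < ‖z‖ := by linarith
  have hzne : z ≠ 0 := norm_pos_iff.1 hzpos
  have hlz : l < Real.log ‖z‖ := Real.log_lt_log (by norm_num) hz2
  have hlz2 : Real.log ‖z‖ ≤ Real.log (3/2 - 2*δ) := Real.log_le_log hzpos hz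
  have hexp : ∀ w : ℂ, w.re ≤ u → ‖Complex.exp w‖ ≤ 3/2 - δ := by
    intro w hw
    rw [Complex.norm_exp, ← Real.exp_log (show 0 < 3/2 - δ by linarith)]
    exact Real.exp_le_exp.2 hw
  have hdiff : ∀ w : ℂ, w.re ≤ u → DifferentiableAt ℂ (fun w => f (Complex.exp w)) w := by
    intro w hw
    have h1 : Complex.exp w ∈ ball (0:ℂ) (3/2) := by
      rw [mem_ball_zero_iff]; linarith [hexp w hw]
    exact (hf.differentiableAt (isOpen_ball.mem_nhds h1)).comp w Complex.differentiableAt_exp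
  have h3 := Complex.HadamardThreeLines.norm_le_interp_of_mem_verticalClosedStrip' (f := fun w => f (Complex.exp w))
    (z := Complex.log z) (a := 9 * A) (b := B) hlu ?_ ?_ ?_ ?_ ?_
  · rw [Complex.exp_log hzne, Complex.log_re] at h3
    refine h3.trans ?_
    have hul : 0 < u - l := by linarith
    have e1 : 0 ≤ (Real.log ‖z‖ - l) / (u - l) := by apply div_nonneg <;> linarith
    apply mul_le_mul _ _ (by positivity) (by linarith)
    · calc (9 * A) ^ (1 - (Real.log ‖z‖ - l) / (u - l)) ≤ (9 * A) ^ (1:ℝ) :=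
            Real.rpow_le_rpow_of_exponent_le (by linarith) (by linarith)
        _ = 9 * A := Real.rpow_one _
    · apply Real.rpow_le_rpow_of_exponent_le hB1
      gcongr
  · rw [Complex.HadamardThreeLines.verticalClosedStrip, mem_preimage, Complex.log_re]
    exact ⟨hlz.le, by linarith⟩
  · apply DifferentiableOn.diffContOnCl
    intro w hw
    apply (hdiff w ?_).differentiableWithinAt
    have : closure (Complex.HadamardThreeLines.verticalStrip l u) ⊆ {w : ℂ | w.re ≤ u} := by
      apply closure_minimal
      · intro w hw; exact hw.2.le
      · exact isClosed_le Complex.continuous_re continuous_const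
    exact this hw
  · refine ⟨B, ?_⟩
    rintro _ ⟨w, hw, rfl⟩
    exact hbg _ (hexp w hw.2)
  · intro w hw
    apply hsm
    rw [Complex.norm_exp, show w.re = l from hw, hl, Real.exp_log (by norm_num)]
  · intro w hw
    exact hbg _ (hexp w (le_of_eq hw))

noncomputable def Sf (x : ℝ) : ℝ := ∑' n, ‖LSeries.term (1 : ℕ → ℂ) (x:ℂ) n‖

lemma norm_LSeries_le (a : ℕ → ℂ) (ha : ∀ n, ‖a n‖ ≤ 1) (x : ℝ) (hx : 1 < x) (s : ℂ) (hs : x ≤ s.re) :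
    ‖LSeries a s‖ ≤ Sf x := by
  have hsum : Summable (fun n => ‖LSeries.term (1 : ℕ → ℂ) (x:ℂ) n‖) :=
    (LSeriesSummable_one_iff.2 (by simpa using hx)).norm
  apply tsum_of_norm_bounded hsum.hasSum
  intro n
  refine (LSeries.norm_term_le_of_re_le_re a (s := (x:ℂ)) (s' := s) (by simpa using hs) n).trans ?_
  apply LSeries.norm_term_le
  simpa using ha n

lemma norm_zeta_le (x : ℝ) (hx : 1 < x) (s : ℂ) (hs : x ≤ s.re) : ‖riemannZeta s‖ ≤ Sf x := by
  rw [← LSeries_one_eq_riemannZeta (by linarith)]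
  exact norm_LSeries_le _ (by simp) x hx s hs

lemma norm_inv_zeta_le (x : ℝ) (hx : 1 < x) (s : ℂ) (hs : x ≤ s.re) : ‖riemannZeta s‖⁻¹ ≤ Sf x := by
  have h := ArithmeticFunction.LSeries_zeta_mul_Lseries_moebius (s := s) (by linarith)
  rw [ArithmeticFunction.LSeries_zeta_eq_riemannZeta (by linarith)] at h
  rw [← norm_inv, ← eq_inv_of_mul_eq_one_right h]
  apply norm_LSeries_le _ _ x hx s hs
  intro n
  norm_cast
  exact ArithmeticFunction.abs_moebius_le_one
end P4

section P5
open MeasureTheory Set Filter Topology Asymptotics Metric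

lemma inv_zeta_large (h0 : ∀ s : ℂ, 1 / 2 < s.re → Zf s ≠ 0) (δ ε : ℝ) (hδ : 0 < δ) (hδ1 : δ < 1/4) (hε : 0 < ε) :
    ∃ C : ℝ, 0 ≤ C ∧ ∀ s : ℂ, 1/2 + 2 * δ ≤ s.re → s.re ≤ 2 → 3 ≤ |s.im| →
      ‖riemannZeta s‖⁻¹ ≤ C * (1 + |s.im|) ^ ε := by
  set S := Sf (5/4) with hS
  have hS0 : 0 < S := by
    have h1 := norm_zeta_le (5/4) (by norm_num) 2 (by norm_num)
    have h2 : 0 < ‖riemannZeta 2‖ := norm_pos_iff.2 (riemannZeta_ne_zero_of_one_le_re (by norm_num))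
    exact h2.trans_le h1
  set A := 1 + |Real.log S| + Real.pi with hA
  have hA1 : 1 ≤ A := by have := Real.pi_pos; have := abs_nonneg (Real.log S); linarith
  have hAS : Real.log S + Real.pi ≤ A := by have := le_abs_self (Real.log S); linarith
  obtain ⟨θ, hθ0, hθ1, H⟩ := three_circles_aux δ A hδ hδ1 hA1
  obtain ⟨C', hC'⟩ := young_aux θ (ε * (δ / 3)) (9 * A) hθ0 hθ1 (by positivity) (by linarith)
  refine ⟨Real.exp (C' + ε * A) * 16 ^ ε, by positivity, fun s hs1 hs2 hs3 => ?_⟩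
  set t := s.im with ht
  set c : ℂ := ⟨2, t⟩ with hc
  set M := Real.log (16 * (1 + |t|)) with hM
  have habs := abs_nonneg t
  have hMpos : 0 < M := Real.log_pos (by linarith)
  have him : ∀ z ∈ ball (0:ℂ) (3/2), 1 ≤ |(c + z).im| := by
    intro z hz
    rw [mem_ball_zero_iff] at hz
    have h1 := Complex.abs_im_le_norm z
    have h2 : (c + z).im = t + z.im := by simp [hc]
    rw [h2]
    have := abs_sub_abs_le_abs_sub t (-z.im)
    rw [abs_neg, sub_neg_eq_add] at this
    linarith
  have hne : ∀ z ∈ ball (0:ℂ) (3/2), c + z ≠ 1 := by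
    intro z hz h
    have := him z hz
    rw [h] at this; simp at this; linarith
  have hre : ∀ z ∈ ball (0:ℂ) (3/2), 1/2 < (c + z).re := by
    intro z hz
    rw [mem_ball_zero_iff] at hz
    have h1 := (abs_le.1 (Complex.abs_re_le_norm z)).1
    have h2 : (c + z).re = 2 + z.re := by simp [hc]
    rw [h2]; linarith
  have hFne : ∀ z ∈ ball (0:ℂ) (3/2), riemannZeta (c + z) ≠ 0 := by
    intro z hz h
    apply h0 _ (hre z hz)
    rw [Zf_of_ne (hne z hz), h, mul_zero]
  have hFd : DifferentiableOn ℂ (fun z => riemannZeta (c + z)) (ball 0 (3/2)) := by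
    intro z hz
    apply DifferentiableAt.differentiableWithinAt
    exact (differentiableAt_riemannZeta (hne z hz)).comp z (by fun_prop)
  obtain ⟨f, hfd, hf0, hfe⟩ := exists_log_ball (by norm_num : (0:ℝ) < 3/2) hFd hFne
  have hfre : ∀ z ∈ ball (0:ℂ) (3/2), (f z).re = Real.log ‖riemannZeta (c + z)‖ := by
    intro z hz
    rw [← hfe z hz, Complex.norm_exp, Real.log_exp]
  have hzmem : ‖s - c‖ ≤ 3/2 - 2 * δ := by
    have : s - c = ((s.re - 2 : ℝ) : ℂ) := by apply Complex.ext <;> simp [hc, ht]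
    rw [this, Complex.norm_real, Real.norm_eq_abs, abs_of_nonpos (by linarith)]; linarith
  have hzb : s - c ∈ ball (0:ℂ) (3/2) := by rw [mem_ball_zero_iff]; linarith
  have hb := H f M hfd hMpos ?_ ?_ ?_ (s - c) hzmem
  · have hx : 0 ≤ 3 / δ * (M + A) := by positivity
    have hy := hC' _ hx
    have e1 : C' + ε * (δ / 3) * (3 / δ * (M + A)) = C' + ε * A + ε * M := by field_simp; ring
    have e2 : ‖riemannZeta s‖⁻¹ = Real.exp (-(f (s - c)).re) := by
      have := hfe _ hzb
      simp only [add_sub_cancel] at this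
      rw [← this, Complex.norm_exp, Real.exp_neg]
    have e3 : -(f (s - c)).re ≤ ‖f (s - c)‖ := by
      have := (abs_le.1 (Complex.abs_re_le_norm (f (s-c)))).1; linarith
    have e4 : (16 * (1 + |t|)) ^ ε = Real.exp (ε * M) := by
      rw [Real.rpow_def_of_pos (by linarith), hM, mul_comm]
    rw [e2, mul_assoc, ← Real.mul_rpow (by norm_num) (by linarith), e4, ← Real.exp_add]
    apply Real.exp_le_exp.2
    linarith
  · rw [hf0]
    simp only [add_zero]
    have hcre : (5/4 : ℝ) ≤ c.re := by simp [hc]; norm_num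
    have u1 := norm_zeta_le (5/4) (by norm_num) c hcre
    have u2 := norm_inv_zeta_le (5/4) (by norm_num) c hcre
    have hpos : 0 < ‖riemannZeta c‖ := norm_pos_iff.2 (by simpa using hFne 0 (by simp))
    have v1 := Real.log_le_log hpos u1
    have v2 := Real.log_le_log (by positivity) u2
    rw [Real.log_inv] at v2
    refine (Complex.norm_le_abs_re_add_abs_im _).trans ?_
    rw [Complex.log_re, Complex.log_im]
    have w1 : |Real.log ‖riemannZeta c‖| ≤ Real.log S := abs_le.2 ⟨by linarith, v1⟩
    have w2 := Complex.abs_arg_le_pi (riemannZeta c)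
    linarith
  · intro z hz
    have hz' : z ∈ ball (0:ℂ) (3/2) := ball_subset_ball (by norm_num) hz
    rw [hfre z hz']
    rw [mem_ball_zero_iff] at hz
    have h1 := (abs_le.1 (Complex.abs_re_le_norm z)).1
    have h2 : (c + z).re = 2 + z.re := by simp [hc]
    have u1 := norm_zeta_le (5/4) (by norm_num) (c + z) (by rw [h2]; linarith)
    have v1 := Real.log_le_log (norm_pos_iff.2 (hFne z hz')) u1
    linarith [Real.pi_pos]
  · intro z hz
    rw [hfre z hz]
    apply Real.log_le_log (norm_pos_iff.2 (hFne z hz))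
    have h1 : 1 ≤ ‖c + z - 1‖ := by
      refine (him z hz).trans ?_
      have := Complex.abs_im_le_norm (c + z - 1)
      simpa using this
    refine (zeta_growth (hre z hz).le h1).trans ?_
    have h2 : ‖c + z‖ ≤ ‖c‖ + ‖z‖ := norm_add_le _ _
    have h3 : ‖c‖ ≤ 2 + |t| := by
      have := Complex.norm_le_abs_re_add_abs_im c
      simpa [hc] using this
    rw [mem_ball_zero_iff] at hz
    linarith

noncomputable def Gf (s : ℂ) : ℂ := (s - 1) / Zf s

lemma Gf_of_ne {s : ℂ} (hs : s ≠ 1) : Gf s = (riemannZeta s)⁻¹ := by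
  rw [Gf, Zf_of_ne hs, div_mul_eq_div_div, div_self (sub_ne_zero.2 hs), one_div]

lemma Gf_differentiableAt (h0 : ∀ s : ℂ, 1 / 2 < s.re → Zf s ≠ 0) (s : ℂ) (hs : 1/2 < s.re) :
    DifferentiableAt ℂ Gf s :=
  (differentiableAt_id.sub_const 1).div (Zf_differentiable s) (h0 s hs)

lemma Gf_bound (h0 : ∀ s : ℂ, 1 / 2 < s.re → Zf s ≠ 0) (δ ε : ℝ) (hδ : 0 < δ) (hδ1 : δ < 1/4) (hε : 0 < ε) :
    ∃ C : ℝ, 0 ≤ C ∧ ∀ s : ℂ, 1/2 + 2 * δ ≤ s.re → s.re ≤ 2 →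
      ‖Gf s‖ ≤ C * (1 + |s.im|) ^ ε := by
  obtain ⟨C1, hC1, H1⟩ := inv_zeta_large h0 δ ε hδ hδ1 hε
  have hcpt : IsCompact (Icc (1/2 + 2 * δ) 2 ×ℂ Icc (-3) 3) := isCompact_Icc.reProdIm isCompact_Icc
  have hcont : ContinuousOn Gf (Icc (1/2 + 2 * δ) 2 ×ℂ Icc (-3) 3) := by
    intro s hs
    have := (Complex.mem_reProdIm.1 hs).1.1
    exact (Gf_differentiableAt h0 s (by linarith)).continuousAt.continuousWithinAt
  obtain ⟨C2, hC2⟩ := hcpt.exists_bound_of_continuousOn hcont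
  refine ⟨C1 + |C2|, by positivity, fun s hs1 hs2 => ?_⟩
  have hone : 1 ≤ (1 + |s.im|) ^ ε := Real.one_le_rpow (by linarith [abs_nonneg s.im]) hε.le
  by_cases h3 : 3 ≤ |s.im|
  · have hne : s ≠ 1 := fun h => by rw [h] at h3; simp at h3; linarith
    rw [Gf_of_ne hne, norm_inv]
    refine (H1 s hs1 hs2 h3).trans ?_
    gcongr
    linarith [abs_nonneg C2]
  · push Not at h3
    have h4 := abs_lt.1 h3
    refine (hC2 s (Complex.mem_reProdIm.2 ⟨⟨hs1, hs2⟩, ⟨h4.1.le, h4.2.le⟩⟩)).trans ?_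
    nlinarith [abs_nonneg C2, le_abs_self C2]
end P5

section P6
open MeasureTheory Set Filter Topology Asymptotics Metric

lemma decay_integrable (r : ℝ) (hr : 1 < r) : Integrable (fun y : ℝ => (1 + |y|) ^ (-r)) := by
  have := integrable_one_add_norm (E := ℝ) (μ := volume) (r := r) (by simpa using hr)
  simpa [Real.norm_eq_abs] using this

lemma contour_shift (f : ℂ → ℂ) (a b C r : ℝ) (hab : a ≤ b) (hr : 1 < r)
    (hf : ∀ s : ℂ, a ≤ s.re → s.re ≤ b → DifferentiableAt ℂ f s)
    (hb : ∀ s : ℂ, a ≤ s.re → s.re ≤ b → ‖f s‖ ≤ C * (1 + |s.im|) ^ (-r)) :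
    ∫ y : ℝ, f (a + y * Complex.I) = ∫ y : ℝ, f (b + y * Complex.I) := by
  have hint : ∀ σ : ℝ, a ≤ σ → σ ≤ b → Integrable (fun y : ℝ => f (σ + y * Complex.I)) := by
    intro σ h1 h2
    have hc : Continuous (fun y : ℝ => f (σ + y * Complex.I)) := by
      rw [continuous_iff_continuousAt]
      intro y
      have hd := (hf (σ + y * Complex.I) (by simpa using h1) (by simpa using h2)).continuousAt
      exact ContinuousAt.comp (f := fun y : ℝ => (σ:ℂ) + y * Complex.I) (g := f) hd (by fun_prop)
    refine ((decay_integrable r hr).const_mul C).mono' hc.aestronglyMeasurable (Eventually.of_forall fun y => ?_)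
    have := hb (σ + y * Complex.I) (by simpa using h1) (by simpa using h2)
    simpa using this
  have hlim : ∀ σ : ℝ, a ≤ σ → σ ≤ b → Tendsto (fun T : ℝ => ∫ y in (-T)..T, f (σ + y * Complex.I)) atTop
      (𝓝 (∫ y : ℝ, f (σ + y * Complex.I))) := fun σ h1 h2 =>
    intervalIntegral_tendsto_integral (hint σ h1 h2) tendsto_neg_atTop_atBot tendsto_id
  have hdecay : Tendsto (fun T : ℝ => C * (1 + |T|) ^ (-r) * |b - a|) atTop (𝓝 0) := by
    have h1 : Tendsto (fun T : ℝ => (1 + |T|) ^ (-r)) atTop (𝓝 0) :=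
      (tendsto_rpow_neg_atTop (by linarith : 0 < r)).comp
        (tendsto_atTop_add_const_left _ 1 tendsto_abs_atTop_atTop)
    simpa using (h1.const_mul C).mul_const |b - a|
  have hhor : ∀ ε : ℝ, |ε| = 1 → Tendsto (fun T : ℝ => ∫ x in a..b, f (x + (ε * T : ℝ) * Complex.I)) atTop (𝓝 0) := by
    intro ε hε
    refine squeeze_zero_norm (fun T => ?_) hdecay
    apply intervalIntegral.norm_integral_le_of_norm_le_const
    intro x hx
    rw [uIoc_of_le hab] at hx
    have := hb (x + (ε * T : ℝ) * Complex.I) (by simpa using hx.1.le) (by simpa using hx.2)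
    simpa [abs_mul, hε] using this
  have hrect : ∀ T : ℝ, (∫ x in a..b, f (x + ((-1) * T : ℝ) * Complex.I)) - (∫ x in a..b, f (x + (1 * T : ℝ) * Complex.I))
      + Complex.I • (∫ y in (-T)..T, f (b + y * Complex.I)) - Complex.I • (∫ y in (-T)..T, f (a + y * Complex.I)) = 0 := by
    intro T
    have := Complex.integral_boundary_rect_eq_zero_of_differentiableOn f ⟨a, -T⟩ ⟨b, T⟩ ?_
    · simpa using this
    · intro s hs
      have := (Complex.mem_reProdIm.1 hs).1
      simp only [uIcc_of_le hab] at this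
      exact (hf s this.1 this.2).differentiableWithinAt
  have hl := (((hhor (-1) (by simp)).sub (hhor 1 (by simp))).add ((hlim b hab le_rfl).const_smul Complex.I)).sub
    ((hlim a le_rfl hab).const_smul Complex.I)
  have h0 := tendsto_nhds_unique (hl.congr hrect) tendsto_const_nhds
  simp only [sub_zero, zero_add, smul_eq_mul] at h0
  rw [← mul_sub] at h0
  have := (mul_eq_zero.1 h0).resolve_left Complex.I_ne_zero
  exact (sub_eq_zero.1 this).symm

noncomputable def kN (N : ℕ) (s : ℂ) : ℂ :=
  ((((N:ℝ) + 1 : ℝ) : ℂ) ^ (s + 1) - ((N:ℝ) : ℂ) ^ (s + 1)) * (1 / s - 1 / (s + 1))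

lemma kN_differentiableAt (N : ℕ) (hN : 1 ≤ N) (s : ℂ) (hs : 0 < s.re) : DifferentiableAt ℂ (kN N) s := by
  have h0 : s ≠ 0 := fun h => by rw [h] at hs; simp at hs
  have h1 : s + 1 ≠ 0 := fun h => by
    have : (s + 1).re = 0 := by rw [h]; simp
    simp at this; linarith
  have hN' : (0:ℝ) < N := by exact_mod_cast hN
  have a1 : (((N:ℝ) + 1 : ℝ) : ℂ) ≠ 0 := by exact_mod_cast (by positivity : ((N:ℝ)+1) ≠ 0)
  have a2 : ((N:ℝ) : ℂ) ≠ 0 := by exact_mod_cast hN'.ne'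
  unfold kN
  apply DifferentiableAt.mul
  · apply DifferentiableAt.sub
    · exact DifferentiableAt.const_cpow (by fun_prop) (Or.inl a1)
    · exact DifferentiableAt.const_cpow (by fun_prop) (Or.inl a2)
  · apply DifferentiableAt.sub
    · exact (differentiableAt_const _).div differentiableAt_id h0
    · exact (differentiableAt_const _).div (by fun_prop) h1

lemma kN_bound (N : ℕ) (hN : 1 ≤ N) (θ : ℝ) (h0 : 0 < θ) (h1 : θ < 1) (s : ℂ) (hs : 1/2 ≤ s.re) :
    ‖kN N s‖ ≤ 18 * ((N:ℝ) + 1) ^ (s.re + θ) * (1 + |s.im|) ^ (-(1 + θ)) := by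
  have hN' : (0:ℝ) < N := by exact_mod_cast hN
  set Y : ℝ := (N:ℝ) + 1 with hY
  have hY0 : 0 < Y := by positivity
  have hY1 : 1 ≤ Y := by linarith
  set n1 : ℝ := ‖(Y : ℂ) ^ (s + 1) - ((N:ℝ) : ℂ) ^ (s + 1)‖ with hn1
  have hs0 : s ≠ 0 := fun h => by rw [h] at hs; simp at hs; linarith
  have hs1 : s + 1 ≠ 0 := fun h => by
    have : (s + 1).re = 0 := by rw [h]; simp
    simp at this; linarith
  have b1 : n1 ≤ 2 * Y ^ (s.re + 1) := by
    refine (norm_sub_le _ _).trans ?_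
    rw [Complex.norm_cpow_eq_rpow_re_of_pos hY0, Complex.norm_cpow_eq_rpow_re_of_pos hN', two_mul]
    simp only [Complex.add_re, Complex.one_re]
    gcongr
    linarith
  have b2 : n1 ≤ ‖s + 1‖ * Y ^ s.re := by
    have hder : ∀ x ∈ Icc (N:ℝ) Y, HasDerivWithinAt (fun x : ℝ => (x:ℂ) ^ (s + 1)) ((s + 1) * (x:ℂ) ^ s) (Icc (N:ℝ) Y) x := by
      intro x hx
      have hx0 : x ≠ 0 := (hN'.trans_le hx.1).ne'
      have := hasDerivAt_ofReal_cpow_const (r := s + 1) hx0 hs1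
      rw [add_sub_cancel_right] at this
      exact this.hasDerivWithinAt
    have := norm_image_sub_le_of_norm_deriv_le_segment' hder (C := ‖s + 1‖ * Y ^ s.re) ?_ Y ⟨by linarith, le_rfl⟩
    · rw [hn1]
      simpa [hY] using this
    · intro x hx
      have hx0 : 0 < x := hN'.trans_le hx.1
      rw [norm_mul, Complex.norm_cpow_eq_rpow_re_of_pos hx0]
      gcongr
      exact hx.2.le
  have hn0 : 0 ≤ n1 := norm_nonneg _
  have hs1n : 0 < ‖s + 1‖ := norm_pos_iff.2 hs1
  have hsn : 0 < ‖s‖ := norm_pos_iff.2 hs0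
  have b3 : n1 ≤ 2 * Y ^ (s.re + θ) * ‖s + 1‖ ^ (1 - θ) := by
    calc n1 = n1 ^ θ * n1 ^ (1 - θ) := by
          rw [← Real.rpow_add_of_nonneg hn0 h0.le (by linarith)]; simp
      _ ≤ (2 * Y ^ (s.re + 1)) ^ θ * (‖s + 1‖ * Y ^ s.re) ^ (1 - θ) := by
          gcongr
      _ = 2 ^ θ * Y ^ (s.re + θ) * ‖s + 1‖ ^ (1 - θ) := by
          rw [Real.mul_rpow (by norm_num) (by positivity), Real.mul_rpow (by positivity) (by positivity),
            ← Real.rpow_mul hY0.le, ← Real.rpow_mul hY0.le,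
            show s.re + θ = (s.re + 1) * θ + s.re * (1 - θ) by ring, Real.rpow_add hY0]
          ring
      _ ≤ _ := by
          gcongr
          calc (2:ℝ) ^ θ ≤ 2 ^ (1:ℝ) := Real.rpow_le_rpow_of_exponent_le (by norm_num) h1.le
            _ = 2 := Real.rpow_one _
  have b4 : ‖1 / s - 1 / (s + 1)‖ = ‖s‖⁻¹ * ‖s + 1‖⁻¹ := by
    rw [← norm_inv, ← norm_inv, ← norm_mul]
    congr 1
    field_simp
    ring
  have b5 : ‖s‖ ≤ ‖s + 1‖ := by
    rw [Complex.norm_def, Complex.norm_def]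
    apply Real.sqrt_le_sqrt
    simp only [Complex.normSq_apply, Complex.add_re, Complex.add_im, Complex.one_re, Complex.one_im]
    nlinarith
  have b6 : (1 + |s.im|) / 3 ≤ ‖s‖ := by
    have := Complex.abs_im_le_norm s
    have := (le_abs_self _).trans (Complex.abs_re_le_norm s)
    linarith
  have him := abs_nonneg s.im
  have b7 : ‖s + 1‖ ^ (1 - θ) * (‖s‖⁻¹ * ‖s + 1‖⁻¹) ≤ 9 * (1 + |s.im|) ^ (-(1 + θ)) := by
    calc ‖s + 1‖ ^ (1 - θ) * (‖s‖⁻¹ * ‖s + 1‖⁻¹) = ‖s + 1‖ ^ (-θ) * ‖s‖⁻¹ := by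
          rw [show (1 - θ) = -θ + 1 by ring, Real.rpow_add hs1n, Real.rpow_one]
          field_simp
      _ ≤ ‖s‖ ^ (-θ) * ‖s‖⁻¹ := by
          gcongr ?_ * _
          exact Real.rpow_le_rpow_of_nonpos hsn b5 (by linarith)
      _ = ‖s‖ ^ (-(1 + θ)) := by
          rw [show -(1 + θ) = -θ + -1 by ring, Real.rpow_add hsn, Real.rpow_neg_one]
      _ ≤ ((1 + |s.im|) / 3) ^ (-(1 + θ)) :=
          Real.rpow_le_rpow_of_nonpos (by positivity) b6 (by linarith)
      _ = 3 ^ (1 + θ) * (1 + |s.im|) ^ (-(1 + θ)) := by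
          rw [Real.div_rpow (by positivity) (by norm_num), Real.rpow_neg (by norm_num : (0:ℝ) ≤ 3)]
          field_simp
      _ ≤ _ := by
          gcongr
          calc (3:ℝ) ^ (1 + θ) ≤ 3 ^ (2:ℝ) := Real.rpow_le_rpow_of_exponent_le (by norm_num) (by linarith)
            _ = 9 := by norm_num
  rw [kN, norm_mul, b4]
  calc n1 * (‖s‖⁻¹ * ‖s + 1‖⁻¹) ≤ (2 * Y ^ (s.re + θ) * ‖s + 1‖ ^ (1 - θ)) * (‖s‖⁻¹ * ‖s + 1‖⁻¹) := by gcongr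
    _ = 2 * Y ^ (s.re + θ) * (‖s + 1‖ ^ (1 - θ) * (‖s‖⁻¹ * ‖s + 1‖⁻¹)) := by ring
    _ ≤ 2 * Y ^ (s.re + θ) * (9 * (1 + |s.im|) ^ (-(1 + θ))) := by gcongr
    _ = _ := by ring
end P6

section P7
open MeasureTheory Set Filter Topology Asymptotics Metric

noncomputable def f1 (x : ℝ) : ℂ := ((max (1 - x) 0 : ℝ) : ℂ)

lemma f1_continuous : Continuous f1 := by unfold f1; fun_prop

lemma f1_mellin (s : ℂ) (hs : 0 < s.re) : HasMellin f1 s (1 / s - 1 / (s + 1)) := by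
  have h1 := hasMellin_one_Ioc hs
  have h2 := hasMellin_cpow_Ioc 1 (s := s) (by simp; linarith)
  have h3 := hasMellin_sub h1.1 h2.1
  rw [h1.2, h2.2] at h3
  have heq : EqOn (fun t : ℝ => (t:ℂ) ^ (s - 1) • (indicator (Ioc 0 1) (fun _ => 1 : ℝ → ℂ) t - indicator (Ioc 0 1) (fun t => ↑t ^ (1:ℂ) : ℝ → ℂ) t))
      (fun t : ℝ => (t:ℂ) ^ (s - 1) • f1 t) (Ioi 0) := by
    intro t ht
    have ht : 0 < t := ht
    simp only
    congr 1
    unfold f1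
    by_cases h : t ≤ 1
    · have hm : t ∈ Ioc (0:ℝ) 1 := ⟨ht, h⟩
      rw [indicator_of_mem hm, indicator_of_mem hm, max_eq_left (by linarith)]
      simp
    · have hm : t ∉ Ioc (0:ℝ) 1 := fun h' => h h'.2
      rw [indicator_of_notMem hm, indicator_of_notMem hm, max_eq_right (by linarith)]
      simp
  refine ⟨(integrableOn_congr_fun heq measurableSet_Ioi).1 h3.1, ?_⟩
  rw [← h3.2]
  exact (setIntegral_congr_fun measurableSet_Ioi heq).symm

lemma f1_scaled (a : ℝ) (ha : 0 < a) (s : ℂ) (hs : 0 < s.re) :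
    HasMellin (fun x => (a:ℂ) • f1 (a⁻¹ * x)) s ((a:ℂ) ^ (s + 1) * (1 / s - 1 / (s + 1))) := by
  have h := f1_mellin s hs
  have hc := (MellinConvergent.comp_mul_left (f := f1) (s := s) (inv_pos.2 ha)).2 h.1
  have h2 := hasMellin_const_smul hc (a:ℂ)
  have ha' : (a:ℂ) ≠ 0 := by exact_mod_cast ha.ne'
  rw [mellin_comp_mul_left f1 s (inv_pos.2 ha), h.2] at h2
  convert h2 using 1
  rw [Complex.cpow_add _ _ ha', Complex.cpow_one, Complex.ofReal_inv, Complex.inv_cpow, Complex.cpow_neg, inv_inv]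
  · simp only [smul_eq_mul]; ring
  · rw [Complex.arg_ofReal_of_nonneg ha.le]; exact Real.pi_pos.ne

noncomputable def phiN (N : ℕ) (x : ℝ) : ℂ :=
  (((N:ℝ) + 1 : ℝ) : ℂ) • f1 (((N:ℝ) + 1)⁻¹ * x) - ((N:ℝ) : ℂ) • f1 ((N:ℝ)⁻¹ * x)

lemma phiN_mellin (N : ℕ) (hN : 1 ≤ N) (s : ℂ) (hs : 0 < s.re) : HasMellin (phiN N) s (kN N s) := by
  have hN' : (0:ℝ) < N := by exact_mod_cast hN
  have h1 := f1_scaled ((N:ℝ) + 1) (by positivity) s hs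
  have h2 := f1_scaled N hN' s hs
  have := hasMellin_sub h1.1 h2.1
  rw [h1.2, h2.2, ← sub_mul] at this
  exact this

lemma phiN_nat (N : ℕ) (hN : 1 ≤ N) (n : ℕ) : phiN N n = if n ≤ N then 1 else 0 := by
  have hN' : (0:ℝ) < N := by exact_mod_cast hN
  have hc : phiN N n = ((((N:ℝ) + 1) * max (1 - ((N:ℝ) + 1)⁻¹ * n) 0 - N * max (1 - (N:ℝ)⁻¹ * n) 0 : ℝ) : ℂ) := by
    simp [phiN, f1]
  rw [hc]
  have h1 : ((N:ℝ) + 1) * max (1 - ((N:ℝ) + 1)⁻¹ * n) 0 = max ((N:ℝ) + 1 - n) 0 := by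
    rw [mul_max_of_nonneg _ _ (by positivity)]; rw [mul_zero]; congr 1; field_simp
  have h2 : (N:ℝ) * max (1 - (N:ℝ)⁻¹ * n) 0 = max ((N:ℝ) - n) 0 := by
    rw [mul_max_of_nonneg _ _ (by positivity)]; rw [mul_zero]; congr 1; field_simp
  rw [h1, h2]
  split_ifs with h
  · have h' : (n:ℝ) ≤ N := by exact_mod_cast h
    rw [max_eq_left (by linarith), max_eq_left (by linarith)]; simp
  · have h' : (N:ℝ) + 1 ≤ n := by exact_mod_cast (by omega : N + 1 ≤ n)
    rw [max_eq_right (by linarith), max_eq_right (by linarith)]; simp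

lemma kN_integrable (N : ℕ) (hN : 1 ≤ N) : Integrable (fun y : ℝ => kN N (((2:ℝ):ℂ) + y * Complex.I)) := by
  have hc : Continuous (fun y : ℝ => kN N (((2:ℝ):ℂ) + y * Complex.I)) := by
    rw [continuous_iff_continuousAt]
    intro y
    have hd := (kN_differentiableAt N hN (((2:ℝ):ℂ) + y * Complex.I) (by simp)).continuousAt
    exact ContinuousAt.comp (f := fun y : ℝ => ((2:ℝ):ℂ) + y * Complex.I) (g := kN N) hd (by fun_prop)
  refine ((decay_integrable (1 + 1/2) (by norm_num)).const_mul (18 * ((N:ℝ) + 1) ^ ((2:ℝ) + 1/2))).mono'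
    hc.aestronglyMeasurable (Eventually.of_forall fun y => ?_)
  have := kN_bound N hN (1/2) (by norm_num) (by norm_num) (((2:ℝ):ℂ) + y * Complex.I) (by simp; norm_num)
  have e1 : (((2:ℝ):ℂ) + y * Complex.I).re = 2 := by simp
  have e2 : (((2:ℝ):ℂ) + y * Complex.I).im = y := by simp
  rw [e1, e2] at this
  exact this

lemma kN_inv (N : ℕ) (hN : 1 ≤ N) (n : ℕ) (hn : 1 ≤ n) :
    ∫ y : ℝ, (n:ℂ) ^ (-(((2:ℝ):ℂ) + y * Complex.I)) * kN N (((2:ℝ):ℂ) + y * Complex.I)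
      = (2 * Real.pi : ℝ) * (if n ≤ N then 1 else 0) := by
  have hn' : (0:ℝ) < n := by exact_mod_cast hn
  have hm : ∀ y : ℝ, mellin (phiN N) (((2:ℝ):ℂ) + y * Complex.I) = kN N (((2:ℝ):ℂ) + y * Complex.I) :=
    fun y => (phiN_mellin N hN _ (by simp)).2
  have hcont : Continuous (phiN N) := by
    have := f1_continuous
    unfold phiN
    fun_prop
  have h := mellinInv_mellin_eq 2 (phiN N) hn' (phiN_mellin N hN _ (by simp)).1 (by
    unfold Complex.VerticalIntegrable
    simp_rw [hm]
    exact kN_integrable N hN) hcont.continuousAt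
  rw [mellinInv, phiN_nat N hN n] at h
  simp_rw [hm] at h
  rw [← h]
  simp only [smul_eq_mul, Complex.real_smul, Complex.ofReal_natCast]
  have hpi : (Real.pi : ℂ) ≠ 0 := by exact_mod_cast Real.pi_pos.ne'
  rw [← mul_assoc, ← Complex.ofReal_mul, mul_one_div_cancel (by positivity : (2 * Real.pi) ≠ 0), Complex.ofReal_one, one_mul]

lemma perron (N : ℕ) (hN : 1 ≤ N) :
    ∫ y : ℝ, Gf (((2:ℝ):ℂ) + y * Complex.I) * kN N (((2:ℝ):ℂ) + y * Complex.I) = (2 * Real.pi : ℝ) * Mer N := by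
  set a : ℕ → ℂ := fun n => ((ArithmeticFunction.moebius n : ℤ) : ℂ) with ha
  set l : ℝ → ℂ := fun y => ((2:ℝ):ℂ) + y * Complex.I with hl
  have hre : ∀ y, (l y).re = 2 := fun y => by simp [hl]
  have hlc : Continuous l := by fun_prop
  have hki := kN_integrable N hN
  set F : ℕ → ℝ → ℂ := fun n y => LSeries.term a (l y) n * kN N (l y) with hF
  have ha1 : ∀ n, ‖a n‖ ≤ 1 := by
    intro n
    simp only [ha]
    rw [Complex.norm_intCast]
    exact_mod_cast ArithmeticFunction.abs_moebius_le_one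
  have hnorm : ∀ n y, ‖LSeries.term a (l y) n‖ ≤ ‖LSeries.term (1 : ℕ → ℂ) 2 n‖ := by
    intro n y
    rw [LSeries.norm_term_eq, LSeries.norm_term_eq]
    split_ifs with h
    · exact le_rfl
    · rw [hre]
      simp only [Pi.one_apply, norm_one, Complex.re_ofNat]
      gcongr
      exact ha1 n
  have hFint : ∀ n, Integrable (F n) := by
    intro n
    refine hki.bdd_mul (c := ‖LSeries.term (1 : ℕ → ℂ) 2 n‖) ?_ (Eventually.of_forall (hnorm n))
    apply Continuous.aestronglyMeasurable
    by_cases h : n = 0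
    · simp only [h, LSeries.term_zero]; exact continuous_const
    · have : (fun y => LSeries.term a (l y) n) = fun y => a n / (n:ℂ) ^ (l y) := by
        ext y; rw [LSeries.term_of_ne_zero h]
      rw [this]
      have hn0 : (n:ℂ) ≠ 0 := by exact_mod_cast h
      refine Continuous.div continuous_const (hlc.const_cpow (Or.inl hn0)) (fun y => ?_)
      rw [Ne, Complex.cpow_eq_zero_iff]; tauto
  have hsum1 : Summable (fun n => ‖LSeries.term (1 : ℕ → ℂ) 2 n‖) :=
    (LSeriesSummable_one_iff.2 (by simp)).norm
  have hFsum : Summable fun n => ∫ y, ‖F n y‖ := by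
    refine Summable.of_nonneg_of_le (fun n => integral_nonneg fun y => norm_nonneg _) (fun n => ?_)
      (hsum1.mul_right (∫ y, ‖kN N (l y)‖))
    rw [← integral_const_mul]
    refine integral_mono (hFint n).norm (hki.norm.const_mul _) (fun y => ?_)
    simp only [hF, norm_mul]
    gcongr
    exact hnorm n y
  have key := hasSum_integral_of_summable_integral_norm hFint hFsum
  have hG : ∀ y, ∑' n, F n y = Gf (l y) * kN N (l y) := by
    intro y
    have hs : 1 < (l y).re := by rw [hre]; norm_num
    rw [Gf_of_ne (fun h => by rw [h] at hs; simp at hs)]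
    have h := ArithmeticFunction.LSeries_zeta_mul_Lseries_moebius hs
    rw [ArithmeticFunction.LSeries_zeta_eq_riemannZeta hs] at h
    rw [← eq_inv_of_mul_eq_one_right h]
    simp only [hF]
    rw [tsum_mul_right]
    rfl
  simp_rw [hG] at key
  have hFi : ∀ n, ∫ y, F n y = if n ∈ Finset.Icc 1 N then (2 * Real.pi : ℝ) * a n else 0 := by
    intro n
    by_cases h : n = 0
    · simp [h, hF]
    · have e : ∀ y, F n y = a n * ((n:ℂ) ^ (-(l y)) * kN N (l y)) := by
        intro y
        simp only [hF]
        rw [LSeries.term_of_ne_zero h, Complex.cpow_neg]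
        ring
      simp_rw [e]
      rw [integral_const_mul, kN_inv N hN n (by omega)]
      have : n ∈ Finset.Icc 1 N ↔ n ≤ N := by simp; omega
      simp only [this]
      split_ifs <;> ring
  simp_rw [hFi] at key
  have key2 := hasSum_sum_of_ne_finset_zero (s := Finset.Icc 1 N) (L := SummationFilter.unconditional ℕ)
    (f := fun n => if n ∈ Finset.Icc 1 N then (2 * Real.pi : ℝ) * a n else 0) (fun n hn => by simp only [if_neg hn])
  rw [key.unique key2, Mer, Finset.mul_sum]
  exact Finset.sum_congr rfl fun n hn => by rw [if_pos hn]

lemma mer_bound (h0 : ∀ s : ℂ, 1 / 2 < s.re → Zf s ≠ 0) (ε : ℝ) (hε : 0 < ε) :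
    Mer =O[atTop] (fun n : ℕ => (n:ℝ) ^ (1/2 + ε)) := by
  set θ : ℝ := min (ε / 2) (1/2) with hθ
  have hθ0 : 0 < θ := by positivity
  have hθ1 : θ ≤ 1/2 := min_le_right _ _
  have hθε : θ ≤ ε / 2 := min_le_left _ _
  set δ : ℝ := θ / 4 with hδ
  obtain ⟨C, hC0, hC⟩ := Gf_bound h0 δ (θ/2) (by positivity) (by linarith) (by positivity)
  set σ : ℝ := 1/2 + 2 * δ with hσ
  have hb : ∀ N : ℕ, 1 ≤ N → ∀ s : ℂ, σ ≤ s.re → s.re ≤ 2 →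
      ‖Gf s * kN N s‖ ≤ (C * 18 * ((N:ℝ) + 1) ^ (s.re + θ)) * (1 + |s.im|) ^ (-(1 + θ/2)) := by
    intro N hN s h1 h2
    have k := kN_bound N hN θ hθ0 (by linarith) s (by linarith)
    have him : 0 < 1 + |s.im| := by positivity
    rw [norm_mul]
    calc ‖Gf s‖ * ‖kN N s‖ ≤ (C * (1 + |s.im|) ^ (θ/2)) * (18 * ((N:ℝ) + 1) ^ (s.re + θ) * (1 + |s.im|) ^ (-(1 + θ))) := by
          gcongr
          exact hC s h1 h2
      _ = _ := by
          rw [show -(1 + θ/2) = θ/2 + -(1 + θ) by ring, Real.rpow_add him]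
          ring
  set J : ℝ := ∫ y : ℝ, (1 + |y|) ^ (-(1 + θ/2)) with hJ
  have hJ0 : 0 ≤ J := integral_nonneg fun y => by positivity
  have hmain : ∀ N : ℕ, 1 ≤ N → ‖Mer N‖ ≤ (C * 18 * J * 2 ^ (1/2 + ε)) * (N:ℝ) ^ (1/2 + ε) := by
    intro N hN
    have hN' : (1:ℝ) ≤ N := by exact_mod_cast hN
    have hsh := contour_shift (fun s => Gf s * kN N s) σ 2 (C * 18 * ((N:ℝ) + 1) ^ (2 + θ)) (1 + θ/2)
      (by linarith) (by linarith)
      (fun s h1 h2 => (Gf_differentiableAt h0 s (by linarith)).mul (kN_differentiableAt N hN s (by linarith)))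
      (fun s h1 h2 => (hb N hN s h1 h2).trans (by
        gcongr
        linarith))
    rw [perron N hN] at hsh
    have hle : ‖∫ y : ℝ, Gf (σ + y * Complex.I) * kN N (σ + y * Complex.I)‖ ≤ C * 18 * ((N:ℝ) + 1) ^ (σ + θ) * J := by
      rw [hJ, ← integral_const_mul]
      refine norm_integral_le_of_norm_le ((decay_integrable _ (by linarith)).const_mul _)
        (Eventually.of_forall fun y => ?_)
      have := hb N hN (σ + y * Complex.I) (by simp) (by simp; linarith)
      simpa using this
    rw [hsh, norm_mul] at hle
    have hpi : 1 ≤ ‖((2 * Real.pi : ℝ) : ℂ)‖ := by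
      rw [Complex.norm_real, Real.norm_eq_abs, abs_of_pos (by positivity)]
      linarith [Real.pi_gt_three]
    calc ‖Mer N‖ ≤ ‖((2 * Real.pi : ℝ) : ℂ)‖ * ‖Mer N‖ := le_mul_of_one_le_left (norm_nonneg _) hpi
      _ ≤ _ := hle
      _ ≤ C * 18 * (2 * (N:ℝ)) ^ (1/2 + ε) * J := by
          gcongr
          calc ((N:ℝ) + 1) ^ (σ + θ) ≤ ((N:ℝ) + 1) ^ (1/2 + ε) :=
                Real.rpow_le_rpow_of_exponent_le (by linarith) (by linarith)
            _ ≤ _ := by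
                gcongr
                linarith
      _ = _ := by
          rw [Real.mul_rpow (by norm_num) (by positivity)]; ring
  refine IsBigO.of_bound (C * 18 * J * 2 ^ (1/2 + ε)) ?_
  filter_upwards [eventually_ge_atTop 1] with N hN
  rw [Real.norm_of_nonneg (by positivity : (0:ℝ) ≤ (N:ℝ) ^ (1/2 + ε))]
  exact hmain N hN
end P7

section P8
open MeasureTheory Set Filter Topology Asymptotics Metric

lemma det_isBigO_iff (r : ℝ) :
    (fun n : ℕ => ((Cmat n).det : ℝ)) =O[Filter.atTop] (fun n : ℕ => (n : ℝ) ^ r) ↔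
      Mer =O[atTop] (fun n : ℕ => (n : ℝ) ^ r) := by
  have h : ∀ᶠ n : ℕ in atTop, ‖((Cmat n).det : ℝ)‖ = ‖Mer n‖ := by
    filter_upwards [eventually_ge_atTop 1] with n hn
    have : Mer n = (((Cmat n).det : ℤ) : ℂ) := by
      rw [det_Cmat n hn, Mer]; push_cast; rfl
    rw [this, Complex.norm_intCast, Real.norm_eq_abs]
  rw [← isBigO_norm_left, ← isBigO_norm_left (f' := Mer)]
  exact isBigO_congr h EventuallyEq.rfl
end P8

/-- The Riemann Hypothesis holds if and only if, for every `ε > 0`,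
`det C_n = O(n^{1/2 + ε})` as `n → ∞`. -/
theorem riemannHypothesis_iff_det_Cmat_isBigO :
    RiemannHypothesis ↔ ∀ ε : ℝ, 0 < ε →
      (fun n : ℕ => ((Cmat n).det : ℝ)) =O[Filter.atTop]
        (fun n : ℕ => (n : ℝ) ^ ((1 : ℝ) / 2 + ε)) := by
  constructor
  · intro h ε hε
    rw [det_isBigO_iff]
    exact mer_bound (zero_free_of_RH h) ε hε
  · intro h
    refine RH_of_zero_free fun s hs => ?_
    set m : ℝ := min s.re 1 with hm
    have h1 : 1 / 2 < m := lt_min hs (by norm_num)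
    have h2 : m ≤ 1 := min_le_right _ _
    have h3 : m ≤ s.re := min_le_left _ _
    have := h ((m - 1/2) / 2) (by linarith)
    rw [det_isBigO_iff] at this
    exact mer_zero_free _ (by linarith) (by linarith) this s (by linarith)
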